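/- Let (u_l, u_f) be a finite Stackelberg game with utilities in [0,1], n ≥ 2 follower actions, and inducibility gap Δ > 0. Then for every L > 1/Δ, the function u_RSE is L-Lipschitz on the interval (0, Δ − 1/L]: for all δ, δ' with 0 < δ ≤ δ' ≤ Δ − 1/L, one has |u_RSE(δ) − u_RSE(δ')| ≤ L·(δ' − δ). -/

import Mathlib

open Finset Set

noncomputable section

/-- The simplex of mixed strategies over `m` actions. -/
def simplex (m : ℕ) : Set (Fin m → ℝ) := stdSimplex ℝ (Fin m)

/-- Mixed-strategy extension of a utility matrix: `u(x, j) = ∑ i, x i * u i j`. -/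
def mixU {m n : ℕ} (u : Fin m → Fin n → ℝ) (x : Fin m → ℝ) (j : Fin n) : ℝ :=
  ∑ i, x i * u i j

/-- The follower's δ-optimal response set (strict inequality):
`BR_δ(x) = {j : u_f(x,j) > max_{j'} u_f(x,j') - δ}`. -/
def BRd {m n : ℕ} (uf : Fin m → Fin n → ℝ) (δ : ℝ) (x : Fin m → ℝ) : Set (Fin n) :=
  {j | mixU uf x j > (⨆ j', mixU uf x j') - δ}

/-- The follower's exact best-response set. -/
def BR0 {m n : ℕ} (uf : Fin m → Fin n → ℝ) (x : Fin m → ℝ) : Set (Fin n) :=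
  {j | mixU uf x j = ⨆ j', mixU uf x j'}

/-- Worst-case leader utility over the follower's δ-optimal response set:
`min_{j ∈ BR_δ(x)} u_l(x, j)`. -/
def valBR {m n : ℕ} (ul uf : Fin m → Fin n → ℝ) (δ : ℝ) (x : Fin m → ℝ) : ℝ :=
  sInf (mixU ul x '' BRd uf δ x)

/-- The δ-RSE leader utility `u_RSE(δ) = sup_{x ∈ Δ^m} min_{j ∈ BR_δ(x)} u_l(x, j)`. -/
def uRSE {m n : ℕ} (ul uf : Fin m → Fin n → ℝ) (δ : ℝ) : ℝ :=
  sSup (valBR ul uf δ '' simplex m)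

/-- The SSE leader utility `u_SSE = sup_{x ∈ Δ^m} max_{j ∈ BR_0(x)} u_l(x, j)`. -/
def uSSE {m n : ℕ} (ul uf : Fin m → Fin n → ℝ) : ℝ :=
  sSup ((fun x => sSup (mixU ul x '' BR0 uf x)) '' simplex m)

/-- The maximin leader utility `u_MM = sup_{x ∈ Δ^m} min_{j ∈ [n]} u_l(x, j)`. -/
def uMM {m n : ℕ} (ul : Fin m → Fin n → ℝ) : ℝ :=
  sSup ((fun x => ⨅ j, mixU ul x j) '' simplex m)

/-- The inducibility gap
`Δ = min_{j} sup_{x ∈ Δ^m} min_{j' ≠ j} (u_f(x, j) - u_f(x, j'))`. -/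
def indGap {m n : ℕ} (uf : Fin m → Fin n → ℝ) : ℝ :=
  ⨅ j, sSup ((fun x => ⨅ j' : {k : Fin n // k ≠ j}, (mixU uf x j - mixU uf x j'.1)) '' simplex m)

/-!
If `j` is the follower's best response to `x`, and `j` beats every other action by at least `Δ`
at `z`, then at the mixture `(1 - t) • x + t • z` any action outside `BR_δ(x)` falls short of `j`
by at least `(1 - t) * δ + t * Δ`. So moving a weight `t = (δ' - δ) / (Δ - δ)` from `x` to `z`
enlarges the follower's tolerance from `δ` to `δ'` without admitting new responses, and costs the
leader at most `t` times the range of `u_l`, where `t ≤ L * (δ' - δ)` because `1 / L ≤ Δ - δ`.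
-/

theorem continuous_iInf_of_finite {X ι : Type*} [TopologicalSpace X] [Finite ι] {f : ι → X → ℝ}
    (hf : ∀ i, Continuous (f i)) : Continuous fun x ↦ ⨅ i, f i x := by
  cases nonempty_fintype ι
  cases isEmpty_or_nonempty ι
  · simpa only [Real.iInf_of_isEmpty] using continuous_const
  · simp only [← Finset.inf'_univ_eq_ciInf]
    exact Continuous.finset_inf'_apply _ fun i _ ↦ hf i

section MixedUtility

variable {m n : ℕ} {x : Fin m → ℝ}

theorem simplex_nonempty [Nonempty (Fin m)] : (simplex m).Nonempty :=
  ⟨_, single_mem_stdSimplex ℝ (Classical.arbitrary (Fin m))⟩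

theorem mixU_add_smul (u : Fin m → Fin n → ℝ) (x z : Fin m → ℝ) (s t : ℝ) (j : Fin n) :
    mixU u (s • x + t • z) j = s * mixU u x j + t * mixU u z j := by
  simp only [mixU, Pi.add_apply, Pi.smul_apply, smul_eq_mul, add_mul, mul_assoc,
    Finset.sum_add_distrib, Finset.mul_sum]

theorem mixU_mem_Icc {u : Fin m → Fin n → ℝ} {a b : ℝ} {j : Fin n}
    (hu : ∀ i, u i j ∈ Set.Icc a b) (hx : x ∈ simplex m) : mixU u x j ∈ Set.Icc a b :=
  (convex_Icc a b).sum_mem (fun i _ ↦ hx.1 i) hx.2 fun i _ ↦ hu i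

theorem continuous_mixU (u : Fin m → Fin n → ℝ) (j : Fin n) :
    Continuous fun x ↦ mixU u x j := by
  unfold mixU
  fun_prop

theorem mixU_le_iSup (u : Fin m → Fin n → ℝ) (x : Fin m → ℝ) (j : Fin n) :
    mixU u x j ≤ ⨆ k, mixU u x k :=
  le_ciSup (Set.finite_range (mixU u x)).bddAbove j

end MixedUtility

section Response

variable {m n : ℕ} {ul uf : Fin m → Fin n → ℝ} {x : Fin m → ℝ} {δ δ' : ℝ}

theorem BR0_nonempty [Nonempty (Fin n)] (uf : Fin m → Fin n → ℝ) (x : Fin m → ℝ) :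
    (BR0 uf x).Nonempty :=
  exists_eq_ciSup_of_finite

theorem BR0_subset_BRd (hδ : 0 < δ) : BR0 uf x ⊆ BRd uf δ x :=
  fun _ hj ↦ (sub_lt_self _ hδ).trans_eq hj.symm

theorem BRd_nonempty [Nonempty (Fin n)] (hδ : 0 < δ) : (BRd uf δ x).Nonempty :=
  (BR0_nonempty uf x).mono (BR0_subset_BRd hδ)

theorem BRd_mono (h : δ ≤ δ') : BRd uf δ x ⊆ BRd uf δ' x :=
  fun _ hj ↦ (sub_le_sub_left h _).trans_lt hj

theorem BRd_mix_subset {z : Fin m → ℝ} {j : Fin n} {g t : ℝ} (hj : j ∈ BR0 uf x)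
    (hgap : ∀ k ≠ j, mixU uf z k + g ≤ mixU uf z j) (hδ : 0 < δ) (ht₀ : 0 ≤ t) (ht₁ : t ≤ 1)
    (hδ' : δ' ≤ (1 - t) * δ + t * g) :
    BRd uf δ' ((1 - t) • x + t • z) ⊆ BRd uf δ x := by
  intro k hk
  by_contra hkx
  have hkj : k ≠ j := fun h ↦ hkx (BR0_subset_BRd hδ (h ▸ hj))
  have gap_x : mixU uf x k + δ ≤ mixU uf x j := by
    rw [show mixU uf x j = _ from hj]
    exact le_sub_iff_add_le.mp (not_lt.mp hkx)
  have gap_mix : mixU uf ((1 - t) • x + t • z) k + δ' ≤ mixU uf ((1 - t) • x + t • z) j := by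
    rw [mixU_add_smul, mixU_add_smul]
    calc (1 - t) * mixU uf x k + t * mixU uf z k + δ'
        ≤ (1 - t) * (mixU uf x k + δ) + t * (mixU uf z k + g) := by linarith
      _ ≤ (1 - t) * mixU uf x j + t * mixU uf z j :=
          add_le_add (mul_le_mul_of_nonneg_left gap_x (sub_nonneg.mpr ht₁))
            (mul_le_mul_of_nonneg_left (hgap k hkj) ht₀)
  exact (sub_lt_iff_lt_add.mp hk).not_ge (gap_mix.trans (mixU_le_iSup uf _ j))

theorem valBR_le {k : Fin n} (hk : k ∈ BRd uf δ x) : valBR ul uf δ x ≤ mixU ul x k :=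
  csInf_le ((Set.toFinite _).image _).bddBelow (Set.mem_image_of_mem _ hk)

theorem le_valBR [Nonempty (Fin n)] (hδ : 0 < δ) {c : ℝ}
    (hc : ∀ k ∈ BRd uf δ x, c ≤ mixU ul x k) : c ≤ valBR ul uf δ x :=
  le_csInf ((BRd_nonempty hδ).image _) (Set.forall_mem_image.mpr hc)

end Response

section RobustUtility

variable {m n : ℕ} [Nonempty (Fin n)] {ul uf : Fin m → Fin n → ℝ} {x : Fin m → ℝ}
  {δ δ' a b t : ℝ}

theorem bddAbove_valBR_image (ul uf : Fin m → Fin n → ℝ) (hδ : 0 < δ) :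
    BddAbove (valBR ul uf δ '' simplex m) := by
  obtain ⟨b, hb⟩ := (Set.finite_range fun p : Fin m × Fin n ↦ ul p.1 p.2).bddAbove
  obtain ⟨a, ha⟩ := (Set.finite_range fun p : Fin m × Fin n ↦ ul p.1 p.2).bddBelow
  refine ⟨b, Set.forall_mem_image.mpr fun x hx ↦ ?_⟩
  obtain ⟨k, hk⟩ : (BRd uf δ x).Nonempty := BRd_nonempty hδ
  exact (valBR_le hk).trans
    (mixU_mem_Icc (fun i ↦ ⟨ha ⟨(i, k), rfl⟩, hb ⟨(i, k), rfl⟩⟩) hx).2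

theorem valBR_le_uRSE (hδ : 0 < δ) (hx : x ∈ simplex m) : valBR ul uf δ x ≤ uRSE ul uf δ :=
  le_csSup (bddAbove_valBR_image ul uf hδ) (Set.mem_image_of_mem _ hx)

theorem valBR_anti (hδ : 0 < δ) (h : δ ≤ δ') : valBR ul uf δ' x ≤ valBR ul uf δ x :=
  le_valBR hδ fun _ hk ↦ valBR_le (BRd_mono h hk)

theorem uRSE_antitoneOn [Nonempty (Fin m)] (ul uf : Fin m → Fin n → ℝ) :
    AntitoneOn (uRSE ul uf) (Set.Ioi 0) := fun _ hδ _ _ h ↦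
  csSup_le (simplex_nonempty.image _) <| Set.forall_mem_image.mpr fun _ hx ↦
    (valBR_anti hδ h).trans (valBR_le_uRSE hδ hx)

theorem valBR_le_valBR_mix_add {z : Fin m → ℝ} {j : Fin n} {g : ℝ}
    (hul : ∀ i j, ul i j ∈ Set.Icc a b) (hx : x ∈ simplex m) (hz : z ∈ simplex m)
    (hj : j ∈ BR0 uf x) (hgap : ∀ k ≠ j, mixU uf z k + g ≤ mixU uf z j) (hδ : 0 < δ)
    (hδ'₀ : 0 < δ') (ht₀ : 0 ≤ t) (ht₁ : t ≤ 1) (hδ' : δ' ≤ (1 - t) * δ + t * g) :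
    valBR ul uf δ x ≤ valBR ul uf δ' ((1 - t) • x + t • z) + t * (b - a) := by
  rw [← sub_le_iff_le_add]
  refine le_valBR hδ'₀ fun k hk ↦ ?_
  have loss_le : mixU ul x k - mixU ul z k ≤ b - a :=
    sub_le_sub (mixU_mem_Icc (hul · k) hx).2 (mixU_mem_Icc (hul · k) hz).1
  calc valBR ul uf δ x - t * (b - a)
      ≤ mixU ul x k - t * (mixU ul x k - mixU ul z k) :=
        sub_le_sub (valBR_le (BRd_mix_subset hj hgap hδ ht₀ ht₁ hδ' hk))
          (mul_le_mul_of_nonneg_left loss_le ht₀)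
    _ = mixU ul ((1 - t) • x + t • z) k := by
        rw [mixU_add_smul]
        ring

end RobustUtility

section InducibilityGap

variable {m n : ℕ} {ul uf : Fin m → Fin n → ℝ} {δ δ' a b t : ℝ}

theorem nonempty_leader_of_indGap_pos (hΔ : 0 < indGap uf) : Nonempty (Fin m) := by
  by_contra h
  rw [not_nonempty_iff] at h
  simp [indGap, simplex, stdSimplex_of_isEmpty_index] at hΔ

theorem nonempty_follower_of_indGap_pos (hΔ : 0 < indGap uf) : Nonempty (Fin n) := by
  by_contra h
  rw [not_nonempty_iff] at h
  exact hΔ.ne' (Real.iInf_of_isEmpty _)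

theorem exists_forall_ne_add_indGap_le [Nonempty (Fin m)] (uf : Fin m → Fin n → ℝ) (j : Fin n) :
    ∃ z ∈ simplex m, ∀ k ≠ j, mixU uf z k + indGap uf ≤ mixU uf z j := by
  have hcont : Continuous fun x ↦
      ⨅ k : {k : Fin n // k ≠ j}, (mixU uf x j - mixU uf x k.1) :=
    continuous_iInf_of_finite fun k ↦ (continuous_mixU uf j).sub (continuous_mixU uf k.1)
  obtain ⟨z, hz, hmax⟩ :=
    (isCompact_stdSimplex ℝ (Fin m)).exists_sSup_image_eq simplex_nonempty hcont.continuousOn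
  refine ⟨z, hz, fun k hk ↦ le_sub_iff_add_le'.mp ?_⟩
  calc indGap uf
      ≤ _ := ciInf_le (Set.finite_range _).bddBelow j
    _ = ⨅ k : {k : Fin n // k ≠ j}, (mixU uf z j - mixU uf z k.1) := hmax
    _ ≤ mixU uf z j - mixU uf z k :=
        ciInf_le (f := fun k : {k : Fin n // k ≠ j} ↦ mixU uf z j - mixU uf z k.1)
          (Set.finite_range _).bddBelow ⟨k, hk⟩

theorem uRSE_le_uRSE_add [Nonempty (Fin m)] [Nonempty (Fin n)]
    (hul : ∀ i j, ul i j ∈ Set.Icc a b) (hδ : 0 < δ) (hδ'₀ : 0 < δ') (ht₀ : 0 ≤ t) (ht₁ : t ≤ 1)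
    (hδ' : δ' ≤ (1 - t) * δ + t * indGap uf) :
    uRSE ul uf δ ≤ uRSE ul uf δ' + t * (b - a) := by
  refine csSup_le (simplex_nonempty.image _) (Set.forall_mem_image.mpr fun x hx ↦ ?_)
  obtain ⟨j, hj⟩ := BR0_nonempty uf x
  obtain ⟨z, hz, hgap⟩ := exists_forall_ne_add_indGap_le uf j
  have hmix : (1 - t) • x + t • z ∈ simplex m :=
    convex_stdSimplex ℝ (Fin m) hx hz (sub_nonneg.mpr ht₁) ht₀ (sub_add_cancel 1 t)
  exact (valBR_le_valBR_mix_add hul hx hz hj hgap hδ hδ'₀ ht₀ ht₁ hδ').trans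
    (add_le_add_left (valBR_le_uRSE hδ'₀ hmix) _)

theorem uRSE_sub_le_div_mul [Nonempty (Fin m)] [Nonempty (Fin n)]
    (hul : ∀ i j, ul i j ∈ Set.Icc a b) (hδ : 0 < δ) (hδδ' : δ ≤ δ') (hδ' : δ' < indGap uf) :
    uRSE ul uf δ - uRSE ul uf δ' ≤ (δ' - δ) / (indGap uf - δ) * (b - a) := by
  have hgap : 0 < indGap uf - δ := sub_pos.mpr (hδδ'.trans_lt hδ')
  have hmix : δ' = (1 - (δ' - δ) / (indGap uf - δ)) * δ +
      (δ' - δ) / (indGap uf - δ) * indGap uf := by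
    linear_combination -(div_mul_cancel₀ (δ' - δ) hgap.ne')
  exact sub_le_iff_le_add'.mpr <| uRSE_le_uRSE_add hul hδ (hδ.trans_le hδδ')
    (div_nonneg (sub_nonneg.mpr hδδ') hgap.le)
    ((div_le_one hgap).mpr (sub_le_sub_right hδ'.le δ)) hmix.le

end InducibilityGap

theorem uRSE_lipschitz_general {m n : ℕ} {ul uf : Fin m → Fin n → ℝ} {a b L δ δ' : ℝ}
    (hul : ∀ i j, ul i j ∈ Set.Icc a b) (hL : 0 < L) (hδ : 0 < δ) (hδδ' : δ ≤ δ')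
    (hδ' : δ' ≤ indGap uf - 1 / L) :
    |uRSE ul uf δ - uRSE ul uf δ'| ≤ L * (δ' - δ) * (b - a) := by
  have hL_inv : 0 < 1 / L := one_div_pos.mpr hL
  have hδ'_lt : δ' < indGap uf := hδ'.trans_lt (sub_lt_self _ hL_inv)
  have hΔ : 0 < indGap uf := (hδ.trans_le hδδ').trans hδ'_lt
  have : Nonempty (Fin m) := nonempty_leader_of_indGap_pos hΔ
  have : Nonempty (Fin n) := nonempty_follower_of_indGap_pos hΔ
  have hab : a ≤ b := Set.nonempty_Icc.mp ⟨_, hul (Classical.arbitrary _) (Classical.arbitrary _)⟩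
  have hdiv : (δ' - δ) / (indGap uf - δ) ≤ L * (δ' - δ) :=
    calc (δ' - δ) / (indGap uf - δ)
        ≤ (δ' - δ) / (1 / L) :=
          div_le_div_of_nonneg_left (sub_nonneg.mpr hδδ') hL_inv (by linarith)
      _ = L * (δ' - δ) := by rw [div_div_eq_mul_div, div_one, mul_comm]
  rw [abs_of_nonneg (sub_nonneg.mpr (uRSE_antitoneOn ul uf hδ (hδ.trans_le hδδ') hδδ'))]
  exact (uRSE_sub_le_div_mul hul hδ hδδ' hδ'_lt).trans
    (mul_le_mul_of_nonneg_right hdiv (sub_nonneg.mpr hab))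

/-- `u_RSE` is `L`-Lipschitz on `(0, Δ − 1/L]` for every `L > 1/Δ`. -/
theorem uRSE_lipschitz (m n : ℕ) (hn : 2 ≤ n) (ul uf : Fin m → Fin n → ℝ)
    (hul : ∀ i j, ul i j ∈ Set.Icc (0:ℝ) 1) (huf : ∀ i j, uf i j ∈ Set.Icc (0:ℝ) 1)
    (hΔ : 0 < indGap uf) (L : ℝ) (hL : 1 / indGap uf < L)
    (δ δ' : ℝ) (h1 : 0 < δ) (h2 : δ ≤ δ') (h3 : δ' ≤ indGap uf - 1 / L) :
    |uRSE ul uf δ - uRSE ul uf δ'| ≤ L * (δ' - δ) := by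
  simpa only [sub_zero, mul_one] using
    uRSE_lipschitz_general hul ((one_div_pos.mpr hΔ).trans hL) h1 h2 h3
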